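/- Under the stated hypotheses, suppose in addition that the convex hull K(σ) of σ does not intersect Σ, and let O be an open (finite or semi-infinite) interval with O ∩ Σ = ∅ such that σ̃ := spec(B) ∩ O is a closed set. If ‖E_A(σ) − E_B(O)‖ < 1, then ‖E_A(σ) − E_B(O)‖ ≤ sin(arctan(‖V‖ / dist(σ̃, Σ))). -/

import Mathlib

/-- `E` is the projection-valued spectral measure of the bounded self-adjoint operator `T`
on the complex Hilbert space `H`: each `E Δ` (for Borel `Δ ⊆ ℝ`) is an orthogonal
projection, `E` is multiplicative and countably additive (in the strong sense), `E ℝ = 1`,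
each `E Δ` commutes with `T`, and on the range of `E Δ` the operator `T` has its
approximate point spectrum inside the closure of `Δ` (which uniquely characterizes the
spectral measure of `T`). -/
structure IsSpectralMeasure {H : Type*} [NormedAddCommGroup H] [InnerProductSpace ℂ H]
    [CompleteSpace H] (T : H →L[ℂ] H) (E : Set ℝ → H →L[ℂ] H) : Prop where
  isSelfAdjoint : ∀ Δ : Set ℝ, MeasurableSet Δ → IsSelfAdjoint (E Δ)
  map_inter : ∀ Δ₁ Δ₂ : Set ℝ, MeasurableSet Δ₁ → MeasurableSet Δ₂ →
    E Δ₁ * E Δ₂ = E (Δ₁ ∩ Δ₂)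
  map_univ : E Set.univ = 1
  countably_additive : ∀ Δ : ℕ → Set ℝ, (∀ n, MeasurableSet (Δ n)) →
    Pairwise (Function.onFun Disjoint Δ) →
    ∀ x : H, HasSum (fun n => E (Δ n) x) (E (⋃ n, Δ n) x)
  commutes : ∀ Δ : Set ℝ, MeasurableSet Δ → Commute T (E Δ)
  spectrum_loc : ∀ Δ : Set ℝ, MeasurableSet Δ → ∀ x : H, E Δ x = x →
    ∀ μ : ℝ, Metric.infDist μ Δ * ‖x‖ ≤ ‖T x - (μ : ℂ) • x‖

open ContinuousLinearMap in
theorem IsSelfAdjoint.isUnit_of_forall_mul_norm_le {H : Type*} [NormedAddCommGroup H]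
    [InnerProductSpace ℂ H] [CompleteSpace H] {S : H →L[ℂ] H} (hS : IsSelfAdjoint S)
    {m : ℝ} (hm : 0 < m) (h : ∀ x, m * ‖x‖ ≤ ‖S x‖) : IsUnit S := by
  rw [isUnit_iff_bijective, bijective_iff_dense_range_and_antilipschitz]
  refine ⟨?_, ⟨m⁻¹, by positivity⟩, S.antilipschitz_of_bound fun x => ?_⟩
  · rw [Submodule.topologicalClosure_eq_top_iff, orthogonal_range, hS.adjoint_eq,
      Submodule.eq_bot_iff]
    intro x hx
    have hx' : S x = 0 := hx
    have := h x
    rw [hx', norm_zero] at this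
    exact norm_le_zero_iff.mp (nonpos_of_mul_nonpos_right this hm)
  · change ‖x‖ ≤ m⁻¹ * ‖S x‖
    rw [inv_mul_eq_div, le_div_iff₀ hm, mul_comm]
    exact h x

theorem IsUnit.exists_forall_mul_norm_le {H : Type*} [NormedAddCommGroup H]
    [InnerProductSpace ℂ H] {S : H →L[ℂ] H} (hS : IsUnit S) :
    ∃ m > 0, ∀ x, m * ‖x‖ ≤ ‖S x‖ := by
  obtain ⟨u, rfl⟩ := hS
  set R : H →L[ℂ] H := ↑u⁻¹
  refine ⟨(‖R‖ + 1)⁻¹, by positivity, fun x => ?_⟩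
  have hx : R ((u : H →L[ℂ] H) x) = x := by
    rw [← mul_apply_eq_comp]; simp [R]
  rw [inv_mul_le_iff₀ (by positivity)]
  calc ‖x‖ = ‖R ((u : H →L[ℂ] H) x)‖ := by rw [hx]
    _ ≤ ‖R‖ * ‖(u : H →L[ℂ] H) x‖ := R.le_opNorm _
    _ ≤ _ := by gcongr; linarith

namespace IsStarProjection

variable {H : Type*} [NormedAddCommGroup H] [InnerProductSpace ℂ H] [CompleteSpace H]
  {P Q : H →L[ℂ] H}

theorem apply_apply (hP : IsStarProjection P) (x : H) : P (P x) = P x := by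
  rw [← mul_apply_eq_comp, hP.isIdempotentElem.eq]

theorem norm_sq_eq_add (hP : IsStarProjection P) (x : H) :
    ‖x‖ ^ 2 = ‖P x‖ ^ 2 + ‖x - P x‖ ^ 2 := by
  have h : inner ℂ (P x) (x - P x) = 0 := by
    rw [hP.isSelfAdjoint.isSymmetric.apply_clm, map_sub, hP.apply_apply, sub_self, inner_zero_right]
  have := norm_add_sq_eq_norm_sq_add_norm_sq_of_inner_eq_zero _ _ h
  rw [add_sub_cancel] at this
  nlinarith

theorem norm_apply_le (hP : IsStarProjection P) (x : H) : ‖P x‖ ≤ ‖x‖ :=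
  abs_le_of_sq_le_sq' (by nlinarith [hP.norm_sq_eq_add x, sq_nonneg ‖x - P x‖])
    (norm_nonneg x) |>.2

/-- If `‖P - Q‖ < 1`, every vector in the range of `P` is the image under `P` of a vector in the
range of `Q`. -/
theorem exists_apply_eq_of_norm_sub_lt_one (hP : IsStarProjection P) (hQ : IsStarProjection Q)
    (h : ‖P - Q‖ < 1) {x : H} (hx : P x = x) : ∃ y, Q y = y ∧ P y = x := by
  have hlt : ‖(P - Q) * (P - Q)‖ < 1 :=
    (norm_mul_le _ _).trans_lt (by nlinarith [norm_nonneg (P - Q)])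
  obtain ⟨u, hu⟩ := isUnit_one_sub_of_norm_lt_one hlt
  have key : P * (1 - (P - Q) * (P - Q)) = P * Q * P := by
    have h1 := hP.isIdempotentElem.eq
    have h2 := hQ.isIdempotentElem.eq
    simp only [mul_sub, sub_mul, mul_one, ← mul_assoc, h1, h2]
    abel
  set z : H := (↑u⁻¹ : H →L[ℂ] H) x
  have hz : (1 - (P - Q) * (P - Q)) z = x := by
    rw [← hu, ← mul_apply_eq_comp]; simp
  refine ⟨Q (P z), hQ.apply_apply _, ?_⟩
  have := congrArg (fun S : H →L[ℂ] H => S z) key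
  simp only [mul_apply_eq_comp] at this
  rw [← this, hz, hx]

/-- If `‖P - Q‖ < 1`, then `‖(1 - Q) P‖ ≤ ‖(1 - P) Q‖`. -/
theorem norm_sub_apply_le_of_norm_sub_lt_one (hP : IsStarProjection P) (hQ : IsStarProjection Q)
    (h : ‖P - Q‖ < 1) {x : H} (hx : P x = x) : ‖x - Q x‖ ≤ ‖(1 - P) * Q‖ * ‖x‖ := by
  set s := ‖(1 - P) * Q‖
  obtain ⟨y, hy, rfl⟩ := hP.exists_apply_eq_of_norm_sub_lt_one hQ h hx
  have hs : ‖y - P y‖ ≤ s * ‖y‖ := by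
    have := ((1 - P) * Q).le_opNorm y
    simpa [hy] using this
  have hs1 : s < 1 := by
    have : (1 - P) * Q = (Q - P) * Q := by simp [sub_mul, hQ.isIdempotentElem.eq]
    refine lt_of_le_of_lt ?_ h
    rw [norm_sub_rev]
    change ‖(1 - P) * Q‖ ≤ _
    rw [this]
    refine ContinuousLinearMap.opNorm_le_bound _ (norm_nonneg _) fun v => ?_
    rw [mul_apply_eq_comp]
    exact ((Q - P).le_opNorm _).trans (by gcongr; exact hQ.norm_apply_le v)
  have hs0 : 0 ≤ s := norm_nonneg _
  have h1 := hP.norm_sq_eq_add y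
  have h2 := hQ.norm_sq_eq_add (P y)
  have h3 : ‖P y‖ ^ 2 ≤ ‖Q (P y)‖ * ‖y‖ := by
    have e : inner ℂ (P y) (P y) = inner ℂ (Q (P y)) y := by
      rw [hQ.isSelfAdjoint.isSymmetric.apply_clm, hy,
        ← hP.isSelfAdjoint.isSymmetric.apply_clm, hP.apply_apply]
    have := norm_inner_le_norm (𝕜 := ℂ) (Q (P y)) y
    rwa [← e, inner_self_eq_norm_sq_to_K, norm_pow, RCLike.norm_ofReal,
      abs_of_nonneg (norm_nonneg _)] at this
  have h4 : (1 - s ^ 2) * ‖y‖ ^ 2 ≤ ‖P y‖ ^ 2 := by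
    have := pow_le_pow_left₀ (norm_nonneg _) hs 2
    nlinarith
  have hs2 : 0 < 1 - s ^ 2 := by nlinarith
  have h5 : (1 - s ^ 2) * ‖P y‖ ^ 2 ≤ ‖Q (P y)‖ ^ 2 := by
    rcases eq_or_lt_of_le (sq_nonneg ‖P y‖) with h0 | h0
    · rw [← h0, mul_zero]; positivity
    · have h6 := pow_le_pow_left₀ (sq_nonneg _) h3 2
      refine le_of_mul_le_mul_right ?_ h0
      calc (1 - s ^ 2) * ‖P y‖ ^ 2 * ‖P y‖ ^ 2 = (1 - s ^ 2) * (‖P y‖ ^ 2) ^ 2 := by ring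
        _ ≤ (1 - s ^ 2) * (‖Q (P y)‖ * ‖y‖) ^ 2 := by gcongr
        _ = ‖Q (P y)‖ ^ 2 * ((1 - s ^ 2) * ‖y‖ ^ 2) := by ring
        _ ≤ _ := by gcongr
  refine abs_le_of_sq_le_sq' ?_ (by positivity) |>.2
  nlinarith

/-- If `‖P - Q‖ < 1`, then `‖P - Q‖ ≤ ‖(1 - P) Q‖`. -/
theorem norm_sub_le_of_norm_sub_lt_one (hP : IsStarProjection P) (hQ : IsStarProjection Q)
    (h : ‖P - Q‖ < 1) : ‖P - Q‖ ≤ ‖(1 - P) * Q‖ := by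
  set s := ‖(1 - P) * Q‖
  have hs0 : 0 ≤ s := norm_nonneg _
  have hPQ : ‖P * (1 - Q)‖ ≤ s := by
    have e : P * (1 - Q) = star ((1 - Q) * P) := by
      simp [hP.isSelfAdjoint.star_eq, hQ.isSelfAdjoint.star_eq]
    rw [e, norm_star]
    refine ContinuousLinearMap.opNorm_le_bound _ hs0 fun v => ?_
    have := hP.norm_sub_apply_le_of_norm_sub_lt_one hQ h (hP.apply_apply v)
    exact this.trans (by gcongr; exact hP.norm_apply_le v)
  refine ContinuousLinearMap.opNorm_le_bound _ hs0 fun v => ?_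
  have h1 := hP.norm_sq_eq_add ((P - Q) v)
  have e1 : P ((P - Q) v) = (P * (1 - Q)) (v - Q v) := by
    simp [hP.apply_apply, hQ.apply_apply]
  have e2 : (P - Q) v - P ((P - Q) v) = -(((1 - P) * Q) (Q v)) := by
    simp [hP.apply_apply, hQ.apply_apply]
  rw [e2, e1, norm_neg] at h1
  have b1 : ‖(P * (1 - Q)) (v - Q v)‖ ≤ s * ‖v - Q v‖ :=
    ContinuousLinearMap.le_of_opNorm_le _ hPQ _
  have b2 : ‖((1 - P) * Q) (Q v)‖ ≤ s * ‖Q v‖ := ContinuousLinearMap.le_opNorm _ _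
  have b1' := pow_le_pow_left₀ (norm_nonneg _) b1 2
  have b2' := pow_le_pow_left₀ (norm_nonneg _) b2 2
  have h2 := hQ.norm_sq_eq_add v
  refine abs_le_of_sq_le_sq' ?_ (by positivity) |>.2
  calc _ ≤ (s * ‖v - Q v‖) ^ 2 + (s * ‖Q v‖) ^ 2 := by linarith
    _ = (s * ‖v‖) ^ 2 := by rw [mul_pow s ‖v‖, h2]; ring

end IsStarProjection

namespace IsSpectralMeasure

variable {H : Type*} [NormedAddCommGroup H] [InnerProductSpace ℂ H] [CompleteSpace H]
  {T : H →L[ℂ] H} {E : Set ℝ → H →L[ℂ] H}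

theorem isStarProjection (hE : IsSpectralMeasure T E) {Δ : Set ℝ} (hΔ : MeasurableSet Δ) :
    IsStarProjection (E Δ) where
  isIdempotentElem := by
    rw [IsIdempotentElem, hE.map_inter Δ Δ hΔ hΔ, Set.inter_self]
  isSelfAdjoint := hE.isSelfAdjoint Δ hΔ

theorem map_empty (hE : IsSpectralMeasure T E) : E ∅ = 0 := by
  ext x
  have h := hE.countably_additive (fun _ => ∅) (fun _ => MeasurableSet.empty)
    (fun _ _ _ => by simp [Function.onFun]) x
  exact tendsto_nhds_unique tendsto_const_nhds h.summable.tendsto_atTop_zero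

theorem eq_zero_of_subset (hE : IsSpectralMeasure T E) {Δ₁ Δ₂ : Set ℝ}
    (h₁ : MeasurableSet Δ₁) (h₂ : MeasurableSet Δ₂) (h : Δ₁ ⊆ Δ₂) (h0 : E Δ₂ = 0) :
    E Δ₁ = 0 := by
  have := hE.map_inter Δ₁ Δ₂ h₁ h₂
  rwa [h0, mul_zero, Set.inter_eq_left.mpr h, eq_comm] at this

theorem map_union (hE : IsSpectralMeasure T E) {Δ₁ Δ₂ : Set ℝ}
    (h₁ : MeasurableSet Δ₁) (h₂ : MeasurableSet Δ₂) (h : Disjoint Δ₁ Δ₂) :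
    E (Δ₁ ∪ Δ₂) = E Δ₁ + E Δ₂ := by
  ext x
  let D : ℕ → Set ℝ := fun n => if n = 0 then Δ₁ else if n = 1 then Δ₂ else ∅
  have hD : ∀ n, n ∉ Finset.range 2 → E (D n) x = 0 := fun n hn => by
    rw [Finset.mem_range, not_lt] at hn
    simp [D, show n ≠ 0 by omega, show n ≠ 1 by omega, hE.map_empty]
  have hU : ⋃ n, D n = Δ₁ ∪ Δ₂ := by
    ext t
    simp only [Set.mem_iUnion, Set.mem_union, D]
    constructor
    · rintro ⟨n, hn⟩
      split_ifs at hn <;> simp_all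
    · rintro (ht | ht)
      · exact ⟨0, by simpa⟩
      · exact ⟨1, by simpa⟩
  have hs := hE.countably_additive D
    (fun n => by dsimp only [D]; split_ifs <;> simp [h₁, h₂])
    (fun i j hij => by
      simp only [Function.onFun, D]
      split_ifs <;> simp_all [h.symm]) x
  rw [hU] at hs
  simpa [D, Finset.sum_range_succ] using hs.unique (hasSum_sum_of_ne_finset_zero hD)

theorem iUnion_eq_zero (hE : IsSpectralMeasure T E) {D : ℕ → Set ℝ}
    (hD : ∀ n, MeasurableSet (D n)) (h0 : ∀ n, E (D n) = 0) : E (⋃ n, D n) = 0 := by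
  ext x
  have h := hE.countably_additive (disjointed D) (MeasurableSet.disjointed hD)
    (disjoint_disjointed D) x
  have hz : ∀ n, E (disjointed D n) = 0 := fun n =>
    hE.eq_zero_of_subset (MeasurableSet.disjointed hD n) (hD n) (disjointed_subset D n) (h0 n)
  simp only [iUnion_disjointed, hz, zero_apply] at h
  exact h.unique hasSum_zero

/-- A spectral projection of a set contained in `[c - r, c + r]` cuts `T - c` down to norm at
most `r`. -/
theorem norm_sub_smul_le (hE : IsSpectralMeasure T E) (hT : IsSelfAdjoint T) {Δ : Set ℝ}
    (hΔ : MeasurableSet Δ) {c r : ℝ} (hr : 0 ≤ r) (hsub : ∀ t ∈ Δ, |t - c| ≤ r) {x : H}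
    (hx : E Δ x = x) : ‖T x - (c : ℂ) • x‖ ≤ r * ‖x‖ := by
  rcases Δ.eq_empty_or_nonempty with rfl | hne
  · rw [hE.map_empty, zero_apply] at hx
    subst hx
    simp
  set P := E Δ
  have hP : IsStarProjection P := hE.isStarProjection hΔ
  have hcomm : ∀ y, P (T y) = T (P y) := fun y => by
    have := congrArg (fun S : H →L[ℂ] H => S y) (hE.commutes Δ hΔ).eq
    simpa using this.symm
  set S : H →L[ℂ] H := (T - (c : ℂ) • 1) * P
  have hSapp : ∀ y, S y = T (P y) - (c : ℂ) • P y := fun y => by simp [S]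
  have hS : IsSelfAdjoint S := by
    have hT' : IsSelfAdjoint (T - (c : ℂ) • (1 : H →L[ℂ] H)) :=
      hT.sub (IsSelfAdjoint.smul (by simp [isSelfAdjoint_iff]) (IsSelfAdjoint.one _))
    refine (IsSelfAdjoint.commute_iff hT' hP.isSelfAdjoint).mp ?_
    ext y
    simp [hcomm]
  suffices hSr : ‖S‖ ≤ r by
    have := S.le_of_opNorm_le hSr x
    rwa [hSapp, hx] at this
  have hnot : ∀ μ : ℝ, r < |μ| → μ ∉ spectrum ℝ S := by
    intro μ hμ
    rw [spectrum.notMem_iff]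
    have hsa : IsSelfAdjoint (algebraMap ℝ (H →L[ℂ] H) μ - S) :=
      (IsSelfAdjoint.algebraMap _ (IsSelfAdjoint.all μ)).sub hS
    refine hsa.isUnit_of_forall_mul_norm_le (sub_pos.mpr hμ) fun y => ?_
    have hdist : |μ| - r ≤ Metric.infDist (c + μ) Δ := by
      refine (Metric.le_infDist hne).mpr fun {t} ht => ?_
      have h1 := hsub t ht
      have h2 := abs_sub_abs_le_abs_sub μ (t - c)
      rw [Real.dist_eq, show c + μ - t = μ - (t - c) by ring]
      linarith
    set z := (algebraMap ℝ (H →L[ℂ] H) μ - S) y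
    have hz : z = (μ : ℂ) • y - (T (P y) - (c : ℂ) • P y) := by
      simp [z, hSapp, Algebra.algebraMap_eq_smul_one]
    have hPz : P z = -(T (P y) - ((c + μ : ℝ) : ℂ) • P y) := by
      rw [hz]
      simp only [map_sub, map_smul, hcomm, hP.apply_apply, Complex.ofReal_add, add_smul]
      abel
    have hPz' : z - P z = (μ : ℂ) • (y - P y) := by
      rw [hPz, hz]
      simp only [Complex.ofReal_add, add_smul, smul_sub]
      abel
    have b1 : (|μ| - r) * ‖P y‖ ≤ ‖P z‖ := by
      rw [hPz, norm_neg]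
      refine le_trans ?_ (hE.spectrum_loc Δ hΔ (P y) (hP.apply_apply y) (c + μ))
      gcongr
    have b2 : (|μ| - r) * ‖y - P y‖ ≤ ‖z - P z‖ := by
      rw [hPz', norm_smul, Complex.norm_real, Real.norm_eq_abs]
      gcongr
      linarith
    have hμ0 : 0 ≤ |μ| - r := by linarith
    have b1' := pow_le_pow_left₀ (by positivity) b1 2
    have b2' := pow_le_pow_left₀ (by positivity) b2 2
    refine abs_le_of_sq_le_sq' ?_ (norm_nonneg _) |>.2
    rw [hP.norm_sq_eq_add z, mul_pow, hP.norm_sq_eq_add y]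
    linarith
  by_contra! hlt
  have : Nontrivial (H →L[ℂ] H) := ⟨S, 0, fun h0 => by rw [h0, norm_zero] at hlt; linarith⟩
  rcases CStarAlgebra.norm_or_neg_norm_mem_spectrum hS with h | h
  · exact hnot _ (by simpa using hlt) h
  · exact hnot _ (by simpa using hlt) h

/-- The spectral measure vanishes off the spectrum. -/
theorem eq_zero_of_disjoint_spectrum (hE : IsSpectralMeasure T E) (hT : IsSelfAdjoint T)
    {Δ : Set ℝ} (hΔ : MeasurableSet Δ) (hdisj : Disjoint Δ (spectrum ℝ T)) : E Δ = 0 := by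
  suffices hex : ∃ Δ', MeasurableSet Δ' ∧ Δ ⊆ Δ' ∧ E Δ' = 0 by
    obtain ⟨Δ', hΔ', hsub, h0⟩ := hex
    exact hE.eq_zero_of_subset hΔ hΔ' hsub h0
  refine (HereditarilyLindelofSpace.isLindelof Δ).induction_on
    (p := fun s => ∃ Δ', MeasurableSet Δ' ∧ s ⊆ Δ' ∧ E Δ' = 0)
    (fun s t hst ⟨Δ', hm, ht, h⟩ => ⟨Δ', hm, hst.trans ht, h⟩) ?_ ?_
  · intro S hS h
    rcases S.eq_empty_or_nonempty with rfl | hne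
    · exact ⟨∅, MeasurableSet.empty, by simp, hE.map_empty⟩
    obtain ⟨f, rfl⟩ := hS.exists_eq_range hne
    choose D hm hsub h0 using fun n => h (f n) ⟨n, rfl⟩
    refine ⟨⋃ n, D n, MeasurableSet.iUnion hm, ?_, hE.iUnion_eq_zero hm h0⟩
    rw [Set.sUnion_range]
    exact Set.iUnion_mono hsub
  · intro μ hμ
    have hu : IsUnit (algebraMap ℝ (H →L[ℂ] H) μ - T) :=
      spectrum.notMem_iff.mp (Set.disjoint_left.mp hdisj hμ)
    obtain ⟨m, hm, hlow⟩ := hu.exists_forall_mul_norm_le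
    refine ⟨Metric.closedBall μ (m / 2),
      mem_nhdsWithin_of_mem_nhds (Metric.closedBall_mem_nhds _ (by positivity)), ?_⟩
    refine ⟨_, Metric.isClosed_closedBall.measurableSet, subset_rfl, ?_⟩
    set Δ' := Metric.closedBall μ (m / 2) with hdef
    have hΔ' : MeasurableSet Δ' := Metric.isClosed_closedBall.measurableSet
    ext x
    have hx := (hE.isStarProjection hΔ').apply_apply x
    have hup := hE.norm_sub_smul_le hT hΔ' (half_pos hm).le (c := μ)
      (fun t ht => by simpa [hdef, Real.dist_eq] using ht) hx
    have hlow' := hlow (E Δ' x)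
    have e : (algebraMap ℝ (H →L[ℂ] H) μ - T) (E Δ' x) =
        -(T (E Δ' x) - (μ : ℂ) • E Δ' x) := by
      simp [Algebra.algebraMap_eq_smul_one]
    rw [e, norm_neg] at hlow'
    have : ‖E Δ' x‖ ≤ 0 := by nlinarith
    simpa using this

end IsSpectralMeasure

/-- If all vectors `x` in the range of `Q` satisfy
`(r + δ) ‖(1 - P) x‖ ≤ ‖(1 - P) Q‖ r ‖x‖ + v ‖P x‖`, then `δ tan Θ ≤ v`, where `Θ` is the angle
with `sin Θ = ‖(1 - P) Q‖`. -/
theorem IsStarProjection.mul_norm_le_mul_sqrt {H : Type*} [NormedAddCommGroup H]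
    [InnerProductSpace ℂ H] [CompleteSpace H] {P Q : H →L[ℂ] H} (hP : IsStarProjection P)
    (hQ : IsStarProjection Q) {r δ v : ℝ} (hr : 0 ≤ r) (hδ : 0 ≤ δ) (hv : 0 ≤ v)
    (h : ∀ x, Q x = x →
      (r + δ) * ‖x - P x‖ ≤ ‖(1 - P) * Q‖ * (r * ‖x‖) + v * ‖P x‖) :
    δ * ‖(1 - P) * Q‖ ≤ v * √(1 - ‖(1 - P) * Q‖ ^ 2) := by
  set s := ‖(1 - P) * Q‖
  have hs0 : 0 ≤ s := norm_nonneg _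
  rcases hs0.eq_or_lt with h0 | hpos
  · rw [← h0, mul_zero]; positivity
  have key : ∀ t ∈ Set.Ico 0 s, (r + δ) * t ≤ s * r + v * √(1 - t ^ 2) := by
    rintro t ⟨ht0, hts⟩
    obtain ⟨x, hx⟩ : ∃ x, t * ‖x‖ < ‖((1 - P) * Q) x‖ := by
      by_contra! hcon
      exact hts.not_ge (ContinuousLinearMap.opNorm_le_bound _ ht0 hcon)
    have e : ((1 - P) * Q) x = Q x - P (Q x) := by simp
    rw [e] at hx
    set y := Q x
    have hyx : ‖y‖ ≤ ‖x‖ := hQ.norm_apply_le x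
    have hty : t * ‖y‖ ≤ ‖y - P y‖ := le_trans (by gcongr) hx.le
    have hy0 : 0 < ‖y‖ := by
      rw [norm_pos_iff]
      intro hy
      simp only [hy, map_zero, sub_zero, norm_zero] at hx
      exact hx.not_ge (by positivity)
    have hPy : ‖P y‖ ≤ √(1 - t ^ 2) * ‖y‖ := by
      have h1 := hP.norm_sq_eq_add y
      have h2 := pow_le_pow_left₀ (by positivity) hty 2
      rw [← Real.sqrt_sq hy0.le, ← Real.sqrt_mul' _ (sq_nonneg _)]
      exact Real.le_sqrt_of_sq_le (by nlinarith)
    have h3 := h y (hQ.apply_apply x)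
    refine le_of_mul_le_mul_right ?_ hy0
    calc (r + δ) * t * ‖y‖ = (r + δ) * (t * ‖y‖) := by ring
      _ ≤ (r + δ) * ‖y - P y‖ := by gcongr
      _ ≤ s * (r * ‖y‖) + v * ‖P y‖ := h3
      _ ≤ s * (r * ‖y‖) + v * (√(1 - t ^ 2) * ‖y‖) := by gcongr
      _ = _ := by ring
  have hlim : (r + δ) * s ≤ s * r + v * √(1 - s ^ 2) := by
    have hl : Filter.Tendsto (fun t : ℝ => (r + δ) * t) (nhdsWithin s (Set.Iio s))
        (nhds ((r + δ) * s)) :=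
      (Continuous.tendsto (by fun_prop) s).mono_left nhdsWithin_le_nhds
    have hr' : Filter.Tendsto (fun t : ℝ => s * r + v * √(1 - t ^ 2))
        (nhdsWithin s (Set.Iio s)) (nhds (s * r + v * √(1 - s ^ 2))) :=
      (Continuous.tendsto (by fun_prop) s).mono_left nhdsWithin_le_nhds
    refine le_of_tendsto_of_tendsto hl hr' ?_
    filter_upwards [Ico_mem_nhdsLT hpos] with t ht using key t ht
  linarith

theorem Real.le_sin_arctan_div {s v δ : ℝ} (hs0 : 0 ≤ s) (hs1 : s ≤ 1) (hv : 0 ≤ v) (hδ : 0 < δ)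
    (h : δ * s ≤ v * √(1 - s ^ 2)) : s ≤ Real.sin (Real.arctan (v / δ)) := by
  set t := v / δ with ht
  have ht0 : 0 ≤ t := by positivity
  have h1 : s ≤ t * √(1 - s ^ 2) := by
    rw [ht, div_mul_eq_mul_div, le_div_iff₀ hδ]; linarith
  have h2 := pow_le_pow_left₀ hs0 h1 2
  rw [mul_pow, Real.sq_sqrt (by nlinarith)] at h2
  rw [Real.sin_arctan, le_div_iff₀ (by positivity)]
  refine abs_le_of_sq_le_sq' ?_ ht0 |>.2
  rw [mul_pow, Real.sq_sqrt (by positivity)]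
  linarith

/-- A compact subset `K` of an interval `O` has positive distance to a closed set `S` that misses
`O`, and it lies in a closed interval of centre `c` and radius `r` for which the distance from `c`
to `S` is at least `r` plus the distance from `K` to `S`. -/
theorem sInf_dist_pos_and_exists_center_radius {K O S : Set ℝ} (hK : IsCompact K) (hKne : K.Nonempty)
    (hKO : K ⊆ O) (hO : O.OrdConnected) (hS : IsClosed S) (hSne : S.Nonempty) (hOS : O ∩ S = ∅) :
    0 < sInf (Set.image2 dist K S) ∧ ∃ c r : ℝ, 0 ≤ r ∧
      K ⊆ Set.Icc (c - r) (c + r) ∧ r + sInf (Set.image2 dist K S) ≤ Metric.infDist c S := by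
  have hdisj : Disjoint K S :=
    (Set.disjoint_iff_inter_eq_empty.mpr hOS).mono_left hKO
  set δ := sInf (Set.image2 dist K S)
  have hδle : ∀ a ∈ K, ∀ b ∈ S, δ ≤ dist a b := fun a ha b hb =>
    csInf_le ⟨0, by rintro _ ⟨x, -, y, -, rfl⟩; exact dist_nonneg⟩ ⟨a, ha, b, hb, rfl⟩
  constructor
  · obtain ⟨a, haK, ha⟩ := hK.exists_isMinOn hKne (Metric.continuous_infDist_pt S).continuousOn
    refine ((hS.notMem_iff_infDist_pos hSne).mp (Set.disjoint_left.mp hdisj haK)).trans_le ?_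
    refine le_csInf (hKne.image2 hSne) ?_
    rintro _ ⟨x, hx, y, hy, rfl⟩
    exact (ha hx).trans (Metric.infDist_le_dist_of_mem hy)
  · obtain ⟨a, haK, ha⟩ := hK.exists_isLeast hKne
    obtain ⟨b, hbK, hb⟩ := hK.exists_isGreatest hKne
    have hab : a ≤ b := ha hbK
    have e1 : (a + b) / 2 - (b - a) / 2 = a := by ring
    have e2 : (a + b) / 2 + (b - a) / 2 = b := by ring
    have hsub : Set.Icc a b ⊆ O := hO.out (hKO haK) (hKO hbK)
    refine ⟨(a + b) / 2, (b - a) / 2, by linarith, ?_, ?_⟩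
    · rw [e1, e2]; exact fun t ht => ⟨ha ht, hb ht⟩
    · refine (Metric.le_infDist hSne).mpr fun {t} ht => ?_
      have htO : t ∉ O := fun h => (Set.eq_empty_iff_forall_notMem.mp hOS t) ⟨h, ht⟩
      have hda := hδle a haK t ht
      have hdb := hδle b hbK t ht
      rw [Real.dist_eq] at *
      rcases lt_or_ge t a with h | h
      · rw [abs_of_pos (by linarith)] at *
        linarith
      · have h' : b < t := by
          by_contra! hle
          exact htO (hsub ⟨h, hle⟩)
        rw [abs_of_neg (by linarith)] at *
        linarith

/-- **Theorem 2.7 (a generalization of the Davis–Kahan tan Θ theorem).**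
Assume the off-diagonal hypotheses and that the convex hull of `σ` does not intersect `Σ`.
Let `O` be an open interval with `O ∩ Σ = ∅` such that `σ̃ = spec(B) ∩ O` is closed.
If `‖E_A(σ) − E_B(O)‖ < 1`, then `‖E_A(σ) − E_B(O)‖ ≤ sin(arctan(‖V‖ / dist(σ̃, Σ)))`. -/
theorem norm_diff_projections_le_sin_arctan
    {H : Type*} [NormedAddCommGroup H] [InnerProductSpace ℂ H] [CompleteSpace H]
    [TopologicalSpace.SeparableSpace H]
    (A V B : H →L[ℂ] H) (hA : IsSelfAdjoint A) (hV : IsSelfAdjoint V) (hB : B = A + V)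
    (σ Sig : Set ℝ) (hσc : IsClosed σ) (hSigc : IsClosed Sig) (hdisj : Disjoint σ Sig)
    (hspec : spectrum ℝ A = σ ∪ Sig)
    (d : ℝ) (hd : d = sInf (Set.image2 dist σ Sig)) (hd0 : 0 < d)
    (EA EB : Set ℝ → H →L[ℂ] H) (hEA : IsSpectralMeasure A EA) (hEB : IsSpectralMeasure B EB)
    (hoff₁ : EA σ * V * EA σ = 0) (hoff₂ : EA Sig * V * EA Sig = 0)
    (hconv : Disjoint (convexHull ℝ σ) Sig)
    (O : Set ℝ) (hO_open : IsOpen O) (hO_interval : O.OrdConnected)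
    (hO_Sig : O ∩ Sig = ∅)
    (h_closed : IsClosed (spectrum ℝ B ∩ O))
    (h_contraction : ‖EA σ - EB O‖ < 1) :
    ‖EA σ - EB O‖ ≤
      Real.sin (Real.arctan (‖V‖ / sInf (Set.image2 dist (spectrum ℝ B ∩ O) Sig))) := by
  have hσm := hσc.measurableSet
  have hSigm := hSigc.measurableSet
  have hOm := hO_open.measurableSet
  have hBsa : IsSelfAdjoint B := hB ▸ hA.add hV
  have hP := hEA.isStarProjection hσm
  have hQ := hEB.isStarProjection hOm
  have hle := hP.norm_sub_le_of_norm_sub_lt_one hQ h_contraction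
  rcases (spectrum ℝ B ∩ O).eq_empty_or_nonempty with hempty | hne
  · have hQ0 : EB O = 0 := hEB.eq_zero_of_disjoint_spectrum hBsa hOm
      (Set.disjoint_iff_inter_eq_empty.mpr (by rw [Set.inter_comm, hempty]))
    rw [hempty]
    simpa [hQ0] using hle
  have hSigne : Sig.Nonempty := by
    rw [Set.nonempty_iff_ne_empty]
    rintro rfl
    simp [hd] at hd0
  have hcompact : IsCompact (spectrum ℝ B ∩ O) :=
    (spectrum.isCompact B).of_isClosed_subset h_closed Set.inter_subset_left
  obtain ⟨hδ, c, r, hr, hK, hdist⟩ := sInf_dist_pos_and_exists_center_radius hcompact hne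
    Set.inter_subset_right hO_interval hSigc hSigne hO_Sig
  set δ := sInf (Set.image2 dist (spectrum ℝ B ∩ O) Sig)
  have hcompl : EA Sig = 1 - EA σ := by
    have h1 := hEA.map_union (hσm.union hSigm) (hσm.union hSigm).compl disjoint_compl_right
    rw [Set.union_compl_self, hEA.map_univ, hEA.map_union hσm hSigm hdisj,
      hEA.eq_zero_of_disjoint_spectrum hA (hσm.union hSigm).compl
        (by rw [hspec]; exact disjoint_compl_left), add_zero] at h1
    rw [h1]; abel
  have hQeq : EB O = EB (O ∩ Set.Icc (c - r) (c + r)) := by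
    have h1 := hEB.map_union (hOm.inter measurableSet_Icc) (hOm.diff measurableSet_Icc)
      (Set.disjoint_sdiff_inter.symm) (Δ₁ := O ∩ Set.Icc (c - r) (c + r))
    rwa [Set.inter_union_sdiff, hEB.eq_zero_of_disjoint_spectrum hBsa
      (hOm.diff measurableSet_Icc)
      (Set.disjoint_left.mpr fun t ht hts => ht.2 (hK ⟨hts, ht.1⟩)), add_zero] at h1
  refine hle.trans (Real.le_sin_arctan_div (norm_nonneg _) ?_ (norm_nonneg _) hδ
    (hP.mul_norm_le_mul_sqrt hQ hr hδ.le (norm_nonneg V) fun x hx => ?_))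
  · refine ContinuousLinearMap.opNorm_le_bound _ zero_le_one fun x => ?_
    rw [one_mul, ← hcompl]
    exact ((hEA.isStarProjection hSigm).norm_apply_le _).trans (hQ.norm_apply_le x)
  have hPS : ∀ y, EA Sig y = y - EA σ y := fun y => by simp [hcompl]
  have hlow := hEA.spectrum_loc Sig hSigm (EA Sig x)
    ((hEA.isStarProjection hSigm).apply_apply x) c
  have hup : ‖B x - (c : ℂ) • x‖ ≤ r * ‖x‖ :=
    hEB.norm_sub_smul_le hBsa (hOm.inter measurableSet_Icc) hr
      (fun t ht => abs_le.mpr ⟨by linarith [ht.2.1], by linarith [ht.2.2]⟩) (hQeq ▸ hx)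
  have hVx : EA Sig (V x) = EA Sig (V (EA σ x)) := by
    have h1 : EA Sig (V (EA Sig x)) = 0 := by
      simpa using congrArg (fun S : H →L[ℂ] H => S x) hoff₂
    rw [hPS x, map_sub, map_sub, sub_eq_zero] at h1
    exact h1
  have hcommA : EA Sig (A x) = A (EA Sig x) := by
    simpa using congrArg (fun S : H →L[ℂ] H => S x) (hEA.commutes Sig hSigm).eq.symm
  have hcommB : EB O (B x) = B x := by
    have := congrArg (fun S : H →L[ℂ] H => S x) (hEB.commutes O hOm).eq.symm
    simpa [hx] using this
  have hQB : EB O (B x - (c : ℂ) • x) = B x - (c : ℂ) • x := by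
    rw [map_sub, map_smul, hx, hcommB]
  have hsplit : A (EA Sig x) - (c : ℂ) • EA Sig x =
      ((1 - EA σ) * EB O) (B x - (c : ℂ) • x) - EA Sig (V (EA σ x)) := by
    rw [← hcompl, mul_apply_eq_comp, hQB, hB, ← hVx, ← hcommA]
    simp only [add_apply, map_sub, map_add, map_smul]
    abel
  rw [← hPS]
  calc (r + δ) * ‖EA Sig x‖ ≤ Metric.infDist c Sig * ‖EA Sig x‖ := by gcongr
    _ ≤ ‖A (EA Sig x) - (c : ℂ) • EA Sig x‖ := hlow
    _ ≤ ‖((1 - EA σ) * EB O) (B x - (c : ℂ) • x)‖ + ‖EA Sig (V (EA σ x))‖ := by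
      rw [hsplit]; exact norm_sub_le _ _
    _ ≤ ‖(1 - EA σ) * EB O‖ * (r * ‖x‖) + ‖V‖ * ‖EA σ x‖ :=
      add_le_add (ContinuousLinearMap.le_opNorm_of_le _ hup)
        (((hEA.isStarProjection hSigm).norm_apply_le _).trans (V.le_opNorm _))
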